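/- Let a, b ∈ ℝⁿ be nonzero vectors and let L be an integer with L ≥ n³. Define a' = ‖a‖·Round(a/‖a‖, L) and b' = ‖b‖·Round(b/‖b‖, L), and let I = supp(a) ∩ supp(b). Then max(‖a'_I‖·‖b'‖, ‖a'‖·‖b'_I‖) ≤ 2·max(‖a_I‖·‖b‖, ‖a‖·‖b_I‖). -/

import Mathlib

open Finset

/-- An index `i*` maximizing `|z i|`. -/
noncomputable def maxIndex {n : ℕ} [NeZero n] (z : Fin n → ℝ) : Fin n :=
  (Finset.exists_max_image Finset.univ (fun i => |z i|)
    (Finset.univ_nonempty_iff.mpr ⟨⟨0, Nat.pos_of_ne_zero (NeZero.ne n)⟩⟩)).choose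

/-- `Round(z, L)`: first set `z̃ i = sign(z i) ⬝ √(⌊z i ^ 2 ⬝ L⌋ / L)` for every `i`; then,
letting `i*` be an index maximizing `|z i|` and `δ = 1 - ∑ i, z̃ i ^ 2`, replace `z̃ i*` by
`sign(z i*) ⬝ √(z̃ i* ^ 2 + δ)`. -/
noncomputable def roundVec {n : ℕ} (z : Fin n → ℝ) (L : ℕ) : Fin n → ℝ :=
  if hn : n = 0 then z
  else
    haveI : NeZero n := ⟨hn⟩
    let zt : Fin n → ℝ := fun i => Real.sign (z i) * Real.sqrt ((⌊(z i) ^ 2 * L⌋ : ℝ) / L)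
    let istar : Fin n := maxIndex z
    fun i => if i = istar then
        Real.sign (z istar) * Real.sqrt ((zt istar) ^ 2 + (1 - ∑ j, (zt j) ^ 2))
      else zt i

/-- The Euclidean norm `‖x‖ = √(∑ i, x i ^ 2)` of a vector `x : Fin n → ℝ`. -/
noncomputable def vnorm {n : ℕ} (x : Fin n → ℝ) : ℝ :=
  Real.sqrt (∑ i, (x i) ^ 2)

/-- `‖x_S‖`: the Euclidean norm of the vector `x` restricted to the index set `S`
(agreeing with `x` on `S` and zero elsewhere). -/
noncomputable def vnormOn {n : ℕ} (S : Finset (Fin n)) (x : Fin n → ℝ) : ℝ :=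
  Real.sqrt (∑ i ∈ S, (x i) ^ 2)

/-- The support `{i : x i ≠ 0}` of a vector, as a `Finset`. -/
noncomputable def supp {n : ℕ} (x : Fin n → ℝ) : Finset (Fin n) :=
  Finset.univ.filter fun i => x i ≠ 0

lemma aux_sq (x : ℝ) (L : ℕ) (hL : 0 < L) :
    (Real.sign x * Real.sqrt ((⌊x ^ 2 * L⌋ : ℝ) / L)) ^ 2 ≤ x ^ 2 ∧
    x ^ 2 - 1 / L ≤ (Real.sign x * Real.sqrt ((⌊x ^ 2 * L⌋ : ℝ) / L)) ^ 2 := by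
  have hL' : (0 : ℝ) < L := by exact_mod_cast hL
  have hf : (0 : ℝ) ≤ (⌊x ^ 2 * L⌋ : ℝ) := by
    exact_mod_cast Int.floor_nonneg.mpr (by positivity)
  rw [mul_pow, Real.sq_sqrt (by positivity)]
  rcases eq_or_ne x 0 with h | h
  · subst h
    simp
  · have hs : Real.sign x ^ 2 = 1 := by
      rcases Real.sign_apply_eq_of_ne_zero x h with h | h <;> rw [h] <;> norm_num
    rw [hs, one_mul]
    constructor
    · rw [div_le_iff₀ hL']
      exact Int.floor_le _
    · rw [le_div_iff₀ hL', sub_mul, one_div, inv_mul_cancel₀ hL'.ne']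
      exact (Int.sub_one_lt_floor _).le

lemma aux_round {n : ℕ} (z : Fin n → ℝ) (hz : ∑ i, z i ^ 2 = 1) (L : ℕ) (hL : n ^ 3 ≤ L)
    (i : Fin n) : (roundVec z L i) ^ 2 ≤ 2 * z i ^ 2 := by
  have hn : n ≠ 0 := by
    rintro rfl
    exact i.elim0
  haveI : NeZero n := ⟨hn⟩
  have hn0 : 0 < n := Nat.pos_of_ne_zero hn
  have hL0 : 0 < L := lt_of_lt_of_le (by positivity) hL
  have hnR : (1 : ℝ) ≤ n := by exact_mod_cast hn0
  have hLR : (n : ℝ) ^ 3 ≤ L := by exact_mod_cast hL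
  have hL0' : (0 : ℝ) < L := by exact_mod_cast hL0
  unfold roundVec
  rw [dif_neg hn]
  dsimp only
  split_ifs with h
  · have hmax : ∀ j, |z j| ≤ |z (maxIndex z)| := fun j =>
      (Finset.exists_max_image Finset.univ (fun i => |z i|)
        (Finset.univ_nonempty_iff.mpr ⟨⟨0, Nat.pos_of_ne_zero (NeZero.ne n)⟩⟩)).choose_spec.2
        j (Finset.mem_univ j)
    rw [h]
    have h1 : 1 ≤ n * z (maxIndex z) ^ 2 := by
      rw [← hz]
      calc ∑ i, z i ^ 2 ≤ ∑ _i : Fin n, z (maxIndex z) ^ 2 :=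
            Finset.sum_le_sum fun j _ => sq_le_sq.mpr (hmax j)
        _ = _ := by simp
    have h2 : ∑ j, (z j ^ 2 - 1 / (L : ℝ)) ≤
        ∑ j, (Real.sign (z j) * Real.sqrt ((⌊(z j) ^ 2 * L⌋ : ℝ) / L)) ^ 2 :=
      Finset.sum_le_sum fun j _ => (aux_sq (z j) L hL0).2
    have h3 : ∑ j, (Real.sign (z j) * Real.sqrt ((⌊(z j) ^ 2 * L⌋ : ℝ) / L)) ^ 2 ≤ 1 := by
      rw [← hz]
      exact Finset.sum_le_sum fun j _ => (aux_sq (z j) L hL0).1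
    rw [Finset.sum_sub_distrib, hz] at h2
    simp only [Finset.sum_const, Finset.card_univ, Fintype.card_fin, nsmul_eq_mul] at h2
    have h4 := (aux_sq (z (maxIndex z)) L hL0).1
    have h5 : (n : ℝ) * (1 / L) ≤ z (maxIndex z) ^ 2 := by
      rw [mul_one_div, div_le_iff₀ hL0']
      have : (n : ℝ) ≤ z (maxIndex z) ^ 2 * (n : ℝ) ^ 3 := by
        have e : z (maxIndex z) ^ 2 * (n : ℝ) ^ 3 = (n * z (maxIndex z) ^ 2) * (n : ℝ) ^ 2 := by ring
        rw [e]
        nlinarith [mul_le_mul_of_nonneg_right h1 (sq_nonneg (n : ℝ))]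
      exact this.trans (by gcongr)
    have hs : Real.sign (z (maxIndex z)) ^ 2 ≤ 1 := by
      rcases Real.sign_apply_eq (z (maxIndex z)) with h | h | h <;> rw [h] <;> norm_num
    have h6 := sq_nonneg
      (Real.sign (z (maxIndex z)) * Real.sqrt ((⌊(z (maxIndex z)) ^ 2 * L⌋ : ℝ) / L))
    rw [mul_pow _ (Real.sqrt (_ + _)), Real.sq_sqrt (by linarith)]
    refine (mul_le_of_le_one_left (by linarith) hs).trans (by linarith)
  · have := (aux_sq (z i) L hL0).1
    nlinarith [sq_nonneg (z i)]

lemma aux_scale {n : ℕ} (a : Fin n → ℝ) (ha : a ≠ 0) (L : ℕ) (hL : n ^ 3 ≤ L) (i : Fin n) :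
    (vnorm a * roundVec (fun j => a j / vnorm a) L i) ^ 2 ≤ 2 * a i ^ 2 := by
  have hpos : 0 < ∑ i, a i ^ 2 := by
    obtain ⟨j, hj⟩ := Function.ne_iff.mp ha
    have hj' : a j ≠ 0 := hj
    exact Finset.sum_pos' (fun i _ => sq_nonneg _) ⟨j, Finset.mem_univ _, by positivity⟩
  have hv : vnorm a ^ 2 = ∑ i, a i ^ 2 := Real.sq_sqrt hpos.le
  have h := aux_round (fun j => a j / vnorm a)
    (by simp only [div_pow]; rw [← Finset.sum_div, hv, div_self hpos.ne']) L hL i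
  have hv0 : 0 < vnorm a ^ 2 := hv ▸ hpos
  calc _ = vnorm a ^ 2 * roundVec (fun j => a j / vnorm a) L i ^ 2 := mul_pow _ _ _
    _ ≤ vnorm a ^ 2 * (2 * (a i / vnorm a) ^ 2) := by gcongr
    _ = 2 * a i ^ 2 := by rw [div_pow, mul_left_comm, mul_div_cancel₀ _ hv0.ne']

lemma aux_norm {n : ℕ} (S : Finset (Fin n)) (a c : Fin n → ℝ)
    (h : ∀ i, c i ^ 2 ≤ 2 * a i ^ 2) : vnormOn S c ≤ Real.sqrt 2 * vnormOn S a := by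
  unfold vnormOn
  rw [← Real.sqrt_mul (by norm_num), Finset.mul_sum]
  exact Real.sqrt_le_sqrt (Finset.sum_le_sum fun i _ => h i)

/-- Rounding preserves the error scale: for nonzero `a, b ∈ ℝⁿ` and an integer `L ≥ n³`,
the rounded vectors `a' = ‖a‖ ⬝ Round(a/‖a‖, L)` and `b' = ‖b‖ ⬝ Round(b/‖b‖, L)` satisfy
`max(‖a'_I‖ ‖b'‖, ‖a'‖ ‖b'_I‖) ≤ 2 max(‖a_I‖ ‖b‖, ‖a‖ ‖b_I‖)`
where `I = supp a ∩ supp b`. -/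
theorem round_error_scale {n : ℕ} (a b : Fin n → ℝ) (ha0 : a ≠ 0) (hb0 : b ≠ 0)
    (L : ℕ) (hL : n ^ 3 ≤ L)
    (a' b' : Fin n → ℝ)
    (ha' : a' = fun i => vnorm a * roundVec (fun j => a j / vnorm a) L i)
    (hb' : b' = fun i => vnorm b * roundVec (fun j => b j / vnorm b) L i) :
    max (vnormOn (supp a ∩ supp b) a' * vnorm b') (vnorm a' * vnormOn (supp a ∩ supp b) b')
      ≤ 2 * max (vnormOn (supp a ∩ supp b) a * vnorm b)
          (vnorm a * vnormOn (supp a ∩ supp b) b) := by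
  have hA : ∀ i, a' i ^ 2 ≤ 2 * a i ^ 2 := fun i => by
    rw [ha']
    exact aux_scale a ha0 L hL i
  have hB : ∀ i, b' i ^ 2 ≤ 2 * b i ^ 2 := fun i => by
    rw [hb']
    exact aux_scale b hb0 L hL i
  have key : ∀ (S T : Finset (Fin n)),
      vnormOn S a' * vnormOn T b' ≤ 2 * (vnormOn S a * vnormOn T b) := fun S T => by
    calc _ ≤ (Real.sqrt 2 * vnormOn S a) * (Real.sqrt 2 * vnormOn T b) :=
          mul_le_mul (aux_norm S a a' hA) (aux_norm T b b' hB) (Real.sqrt_nonneg _)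
            (mul_nonneg (Real.sqrt_nonneg _) (Real.sqrt_nonneg _))
      _ = (Real.sqrt 2 * Real.sqrt 2) * (vnormOn S a * vnormOn T b) := by ring
      _ = _ := by rw [Real.mul_self_sqrt (by norm_num)]
  apply max_le
  · exact (key _ Finset.univ).trans
      (mul_le_mul_of_nonneg_left (le_max_left _ _) (by norm_num))
  · exact (key Finset.univ _).trans
      (mul_le_mul_of_nonneg_left (le_max_right _ _) (by norm_num))
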